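/- Let cells be indexed by Fin n with a symmetric nonnegative workload matrix w, and let f, f' : Fin n → L be two assignments into a finite set L with capacity Wcap. Fix two distinct locations l₀, l₁ ∈ L and suppose f' agrees with f on every cell not assigned to l₀ or l₁ (f' i = f i whenever f i ∉ {l₀, l₁}) and f' only reassigns cells within {l₀, l₁} (f' i ∈ {l₀, l₁} whenever f i ∈ {l₀, l₁}). Let A₀ = f⁻¹(l₀), A₁ = f⁻¹(l₁), A₀' = f'⁻¹(l₀), A₁' = f'⁻¹(l₁). Then COST(f') − COST(f) = Δ(A₀', A₁') − Δ(A₀, A₁), where Δ(B₀, B₁) = ∑_{i ∈ B₀} ∑_{j ∈ B₁} w i j + max(0, Wt(B₀) − Wcap) + max(0, Wt(B₁) − Wcap); in particular COST(f') < COST(f) if and only if Δ(A₀', A₁') < Δ(A₀, A₁). -/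

import Mathlib

open Finset

/-! Every pair `i ≤ j` is either cut by an assignment or internal to one of its fibres, so the cut
weight and the internal weights of the fibres add up to a constant. A reassignment within
`{l₀, l₁}` leaves all other fibres alone, hence changes the cut weight by exactly minus the change
of the internal weight of the fibres over `l₀` and `l₁`. The union of these two fibres is preserved,
and the internal weight of a disjoint union exceeds the sum of the two internal weights by the
weight between the parts; so the cut weight changes by the change of that weight. -/

section Weights

variable {ι L M : Type*} [LE ι] [DecidableLE ι] [DecidableEq L] [AddCommMonoid M]

/-- The total workload `Wt(A)` inside a set `A` of cells, each unordered pair being counted once,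
as `i ≤ j`, and the diagonal included. -/
def internalWeight (w : ι → ι → M) (A : Finset ι) : M :=
  ∑ i ∈ A, ∑ j ∈ A with i ≤ j, w i j

/-- The workload between cells which the assignment `g` sends to different locations. -/
def cutWeight [Fintype ι] (w : ι → ι → M) (g : ι → L) : M :=
  ∑ i, ∑ j with i ≤ j ∧ g i ≠ g j, w i j

/-- The load `W_g(l)` of the location `l` under the assignment `g`. -/
def locationLoad [Fintype ι] (w : ι → ι → M) (g : ι → L) (l : L) : M :=
  ∑ i, ∑ j with i ≤ j ∧ g i = l ∧ g j = l, w i j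

/-- The backhaul cost `COST(g)`, with an arbitrary `penalty` of the load of each location in place
of the excess over the capacity. -/
def backhaulCost [Fintype ι] [Fintype L] (w : ι → ι → M) (penalty : M → M) (g : ι → L) : M :=
  cutWeight w g + ∑ l, penalty (locationLoad w g l)

/-- The pairwise objective `Δ(A, B)`, with an arbitrary `penalty` of the load of each part in place
of the excess over the capacity. -/
def pairwiseCost (w : ι → ι → M) (penalty : M → M) (A B : Finset ι) : M :=
  (∑ i ∈ A, ∑ j ∈ B, w i j) + penalty (internalWeight w A) + penalty (internalWeight w B)

theorem locationLoad_eq_internalWeight [Fintype ι] (w : ι → ι → M) (g : ι → L) (l : L) :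
    locationLoad w g l = internalWeight w {i | g i = l} := by
  rw [locationLoad, internalWeight, sum_filter]
  refine sum_congr rfl fun i _ => ?_
  split_ifs with hi
  · simp only [hi, true_and, filter_filter, and_comm]
  · simp only [hi, false_and, and_false, filter_false, sum_empty]

theorem sum_internalWeight_fiber [Fintype ι] [Fintype L] (w : ι → ι → M) (g : ι → L) :
    ∑ l, internalWeight w {i | g i = l} = ∑ i, ∑ j with i ≤ j ∧ g i = g j, w i j := by
  rw [← sum_fiberwise univ g]
  refine sum_congr rfl fun l _ => sum_congr rfl fun i hi => ?_
  obtain rfl : g i = l := (mem_filter.mp hi).2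
  simp only [filter_filter, and_comm, eq_comm]

theorem cutWeight_add_sum_internalWeight_fiber [Fintype ι] [Fintype L]
    (w : ι → ι → M) (g : ι → L) :
    cutWeight w g + ∑ l, internalWeight w {i | g i = l} = internalWeight w univ := by
  rw [sum_internalWeight_fiber, cutWeight, internalWeight, add_comm, ← sum_add_distrib]
  refine sum_congr rfl fun i _ => ?_
  simp only [← filter_filter]
  exact sum_filter_add_sum_filter_not _ _ _

end Weights

theorem internalWeight_union {ι M : Type*} [LinearOrder ι] [AddCommMonoid M] {w : ι → ι → M}
    (hw : ∀ i j, w i j = w j i) {A B : Finset ι} (hAB : Disjoint A B) :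
    internalWeight w (A ∪ B) =
      internalWeight w A + internalWeight w B + ∑ i ∈ A, ∑ j ∈ B, w i j := by
  have backward : ∑ i ∈ B, ∑ j ∈ A with i ≤ j, w i j = ∑ i ∈ A, ∑ j ∈ B with ¬ i ≤ j, w i j := by
    simp only [sum_filter]
    rw [sum_comm]
    refine sum_congr rfl fun i hi => sum_congr rfl fun j hj => ?_
    have hij : i ≠ j := disjoint_iff_ne.mp hAB i hi j hj
    simp only [hw j i, not_le, hij.symm.le_iff_lt]
  have between : ∑ i ∈ A, ∑ j ∈ B with i ≤ j, w i j + ∑ i ∈ B, ∑ j ∈ A with i ≤ j, w i j =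
      ∑ i ∈ A, ∑ j ∈ B, w i j := by
    rw [backward, ← sum_add_distrib]
    exact sum_congr rfl fun i _ => sum_filter_add_sum_filter_not _ _ _
  have split (i : ι) : ∑ j ∈ A ∪ B with i ≤ j, w i j =
      ∑ j ∈ A with i ≤ j, w i j + ∑ j ∈ B with i ≤ j, w i j := by
    rw [filter_union, sum_union (disjoint_filter_filter hAB)]
  simp only [internalWeight, sum_union hAB, split, sum_add_distrib, ← between]
  abel

theorem sum_sub_sum_of_eq_off_pair {L M : Type*} [Fintype L] [AddCommGroup M]
    {F F' : L → M} {l₀ l₁ : L} (hne : l₀ ≠ l₁) (h : ∀ l ∉ ({l₀, l₁} : Set L), F' l = F l) :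
    ∑ l, F' l - ∑ l, F l = (F' l₀ + F' l₁) - (F l₀ + F l₁) := by
  have off_pair (l : L) (hl : l ≠ l₀ ∧ l ≠ l₁) : F' l - F l = 0 :=
    sub_eq_zero.mpr (h l (by simpa using hl))
  rw [← sum_sub_distrib, Fintype.sum_eq_add l₀ l₁ hne off_pair, add_sub_add_comm]

section Reassignment

variable {ι L M : Type*} {f f' : ι → L}

theorem reassign_mem_iff {S : Set L} (hagree : ∀ i, f i ∉ S → f' i = f i)
    (hwithin : ∀ i, f i ∈ S → f' i ∈ S) (i : ι) : f' i ∈ S ↔ f i ∈ S :=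
  ⟨fun h => by_contra fun hi => hi (hagree i hi ▸ h), hwithin i⟩

theorem reassign_eq_iff_of_notMem {S : Set L} (hagree : ∀ i, f i ∉ S → f' i = f i)
    (hwithin : ∀ i, f i ∈ S → f' i ∈ S) {l : L} (hl : l ∉ S) (i : ι) : f' i = l ↔ f i = l := by
  by_cases hi : f i ∈ S
  · exact iff_of_false (ne_of_mem_of_not_mem (hwithin i hi) hl) (ne_of_mem_of_not_mem hi hl)
  · rw [hagree i hi]

variable [Fintype ι] [DecidableEq L] {l₀ l₁ : L}

theorem fiber_union_fiber_of_reassign [DecidableEq ι]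
    (hagree : ∀ i, f i ∉ ({l₀, l₁} : Set L) → f' i = f i)
    (hwithin : ∀ i, f i ∈ ({l₀, l₁} : Set L) → f' i ∈ ({l₀, l₁} : Set L)) :
    (univ.filter fun i => f' i = l₀) ∪ (univ.filter fun i => f' i = l₁) =
      (univ.filter fun i => f i = l₀) ∪ (univ.filter fun i => f i = l₁) := by
  ext i
  simpa using reassign_mem_iff hagree hwithin i

variable [AddCommGroup M]

theorem sum_fiber_sub_sum_fiber_of_reassign [Fintype L] (Φ : Finset ι → M) (hne : l₀ ≠ l₁)
    (hagree : ∀ i, f i ∉ ({l₀, l₁} : Set L) → f' i = f i)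
    (hwithin : ∀ i, f i ∈ ({l₀, l₁} : Set L) → f' i ∈ ({l₀, l₁} : Set L)) :
    ∑ l, Φ {i | f' i = l} - ∑ l, Φ {i | f i = l} =
      (Φ {i | f' i = l₀} + Φ {i | f' i = l₁}) - (Φ {i | f i = l₀} + Φ {i | f i = l₁}) :=
  sum_sub_sum_of_eq_off_pair hne fun l hl => by
    simp only [reassign_eq_iff_of_notMem hagree hwithin hl]

variable [LinearOrder ι] {w : ι → ι → M}

theorem cutWeight_sub_cutWeight_of_reassign [Finite L] (hw : ∀ i j, w i j = w j i)
    (hne : l₀ ≠ l₁) (hagree : ∀ i, f i ∉ ({l₀, l₁} : Set L) → f' i = f i)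
    (hwithin : ∀ i, f i ∈ ({l₀, l₁} : Set L) → f' i ∈ ({l₀, l₁} : Set L)) :
    cutWeight w f' - cutWeight w f =
      (∑ i with f' i = l₀, ∑ j with f' j = l₁, w i j) -
        ∑ i with f i = l₀, ∑ j with f j = l₁, w i j := by
  cases nonempty_fintype L
  have total := (cutWeight_add_sum_internalWeight_fiber w f').trans
    (cutWeight_add_sum_internalWeight_fiber w f).symm
  have internal := sum_fiber_sub_sum_fiber_of_reassign (internalWeight w) hne hagree hwithin
  have disjoint_fibers (g : ι → L) :
      Disjoint (univ.filter fun i => g i = l₀) (univ.filter fun i => g i = l₁) :=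
    disjoint_filter.mpr fun i _ h₀ h₁ => hne (h₀.symm.trans h₁)
  have pair := congrArg (internalWeight w) (fiber_union_fiber_of_reassign hagree hwithin)
  rw [internalWeight_union hw (disjoint_fibers f'), internalWeight_union hw (disjoint_fibers f)]
    at pair
  grind

theorem cost_change_eq_delta_change_general [Fintype L] (hw : ∀ i j, w i j = w j i)
    (penalty : M → M) (hne : l₀ ≠ l₁)
    (hagree : ∀ i, f i ∉ ({l₀, l₁} : Set L) → f' i = f i)
    (hwithin : ∀ i, f i ∈ ({l₀, l₁} : Set L) → f' i ∈ ({l₀, l₁} : Set L)) :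
    backhaulCost w penalty f' - backhaulCost w penalty f =
      pairwiseCost w penalty {i | f' i = l₀} {i | f' i = l₁} -
        pairwiseCost w penalty {i | f i = l₀} {i | f i = l₁} := by
  have cut := cutWeight_sub_cutWeight_of_reassign hw hne hagree hwithin
  have penalties := sum_fiber_sub_sum_fiber_of_reassign
    (fun A => penalty (internalWeight w A)) hne hagree hwithin
  simp only [backhaulCost, pairwiseCost, locationLoad_eq_internalWeight]
  rw [add_sub_add_comm, cut, penalties]
  abel

end Reassignment

/-- If `f'` differs from `f` only by reassigning cells within the two locations
`l₀, l₁`, then the change in backhaul cost equals the change in the pairwise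
objective `Δ` on the corresponding cellsets; in particular `COST(f') < COST(f)`
iff `Δ(A₀', A₁') < Δ(A₀, A₁)`. -/
theorem cost_change_eq_delta_change {n : ℕ} {L : Type*} [Fintype L] [DecidableEq L]
    (w : Fin n → Fin n → ℝ)
    (hsym : ∀ i j, w i j = w j i)
    (hnn : ∀ i j, 0 ≤ w i j)
    (f f' : Fin n → L) (Wcap : ℝ)
    (l₀ l₁ : L) (hne : l₀ ≠ l₁)
    (hagree : ∀ i, f i ∉ ({l₀, l₁} : Set L) → f' i = f i)
    (hwithin : ∀ i, f i ∈ ({l₀, l₁} : Set L) → f' i ∈ ({l₀, l₁} : Set L))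
    (COST : (Fin n → L) → ℝ)
    (hCOST : ∀ g : Fin n → L, COST g =
      (∑ i : Fin n, ∑ j ∈ univ.filter (fun j => i ≤ j ∧ g i ≠ g j), w i j)
        + ∑ l : L, max 0
            ((∑ i : Fin n, ∑ j ∈ univ.filter (fun j => i ≤ j ∧ g i = l ∧ g j = l), w i j)
              - Wcap))
    (Wt : Finset (Fin n) → ℝ)
    (hWt : ∀ A : Finset (Fin n), Wt A = ∑ i ∈ A, ∑ j ∈ A.filter (fun j => i ≤ j), w i j)
    (Δ : Finset (Fin n) → Finset (Fin n) → ℝ)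
    (hΔ : ∀ B₀ B₁ : Finset (Fin n), Δ B₀ B₁ = (∑ i ∈ B₀, ∑ j ∈ B₁, w i j)
      + max 0 (Wt B₀ - Wcap) + max 0 (Wt B₁ - Wcap)) :
    COST f' - COST f =
      Δ (univ.filter (fun i => f' i = l₀)) (univ.filter (fun i => f' i = l₁))
        - Δ (univ.filter (fun i => f i = l₀)) (univ.filter (fun i => f i = l₁)) ∧
    (COST f' < COST f ↔
      Δ (univ.filter (fun i => f' i = l₀)) (univ.filter (fun i => f' i = l₁))
        < Δ (univ.filter (fun i => f i = l₀)) (univ.filter (fun i => f i = l₁))) := by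
  obtain rfl : COST = backhaulCost w (fun W => max 0 (W - Wcap)) := funext hCOST
  obtain rfl : Wt = internalWeight w := funext hWt
  obtain rfl : Δ = pairwiseCost w (fun W => max 0 (W - Wcap)) := funext₂ hΔ
  have change := cost_change_eq_delta_change_general hsym (fun W => max 0 (W - Wcap)) hne hagree
    hwithin
  exact ⟨change, by rw [← sub_neg, change, sub_neg]⟩
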